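/- (Inversion formula for the Lévy measure, formula (1).) Let −∞ < a < b < ∞ with U({a}) = U({b}) = 0. Then ∫_{[a,b]} ((x − sin x)/x) U(dx) = (1/(4π)) · lim_{R→∞} ∫_{−R}^{R} ρ̂(z) · (∫_a^b e^{−izx} dx) dz, where (x − sin x)/x is interpreted as 0 at x = 0. -/

import Mathlib

open MeasureTheory Filter Asymptotics

lemma aux_inner (s T : ℝ) : ∫ x in (0:ℝ)..T, Real.exp (-s * x) * Real.sin x
    = (1 + s^2)⁻¹ - Real.exp (-s*T) * (Real.cos T + s * Real.sin T) * (1+s^2)⁻¹ := by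
  have hne : 1 + s^2 ≠ 0 := by positivity
  rw [intervalIntegral.integral_eq_sub_of_hasDerivAt
    (f := fun x => -(Real.exp (-s * x) * (Real.cos x + s * Real.sin x) * (1+s^2)⁻¹))]
  · simp; ring
  · intro x _
    have h1 : HasDerivAt (fun x => Real.exp (-s * x)) (Real.exp (-s*x) * (-s * 1)) x :=
      ((hasDerivAt_id x).const_mul (-s)).exp
    have h2 : HasDerivAt (fun x => Real.cos x + s * Real.sin x)
      (-Real.sin x + s * Real.cos x) x :=
      (Real.hasDerivAt_cos x).add ((Real.hasDerivAt_sin x).const_mul s)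
    refine (((h1.mul h2).mul_const (1+s^2)⁻¹).neg).congr_deriv ?_
    field_simp
    ring
  · apply Continuous.intervalIntegrable; fun_prop

lemma aux_exp {x : ℝ} (hx : 0 < x) : ∫ s in Set.Ioi (0:ℝ), Real.exp (-s * x) = x⁻¹ := by
  have := integral_exp_mul_Ioi (a := -x) (by linarith) 0
  simp only [mul_zero, Real.exp_zero] at this
  rw [show (fun s => Real.exp (-s*x)) = fun s => Real.exp (-x * s) by ext s; ring_nf, this]
  field_simp

lemma aux_exp_int {x : ℝ} (hx : 0 < x) :
    IntegrableOn (fun s => Real.exp (-s * x)) (Set.Ioi (0:ℝ)) := by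
  have := exp_neg_integrableOn_Ioi 0 hx
  rwa [show (fun s => Real.exp (-s*x)) = fun s => Real.exp (-x * s) by ext s; ring_nf]

lemma aux_fub (T : ℝ) : Integrable (Function.uncurry fun x s : ℝ => Real.exp (-s * x) * Real.sin x)
    ((volume.restrict (Set.Ioc 0 T)).prod (volume.restrict (Set.Ioi (0:ℝ)))) := by
  rw [integrable_prod_iff (by
    apply Continuous.aestronglyMeasurable
    simp only [Function.uncurry_def]; fun_prop)]
  constructor
  · filter_upwards [ae_restrict_mem measurableSet_Ioc] with x hx
    exact Integrable.mul_const (aux_exp_int hx.1) (Real.sin x)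
  · have : IntegrableOn (fun x => |Real.sinc x|) (Set.Ioc 0 T) :=
      ((Real.continuous_sinc.abs).integrableOn_Icc (a := 0) (b := T)).mono_set Set.Ioc_subset_Icc_self
    refine this.congr ?_
    filter_upwards [ae_restrict_mem measurableSet_Ioc] with x hx
    simp only [Function.uncurry_apply_pair, norm_mul, Real.norm_eq_abs, Real.abs_exp]
    rw [integral_mul_const, aux_exp hx.1, Real.sinc_of_ne_zero hx.1.ne', abs_div, abs_of_pos hx.1]
    field_simp

lemma aux_err_le (T s : ℝ) (hs : 0 ≤ s) :
    |Real.exp (-s*T) * (Real.cos T + s * Real.sin T) * (1+s^2)⁻¹| ≤ 2 * Real.exp (-s*T) := by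
  have h1 : |Real.cos T + s * Real.sin T| ≤ 1 + s := by
    refine (abs_add_le _ _).trans ?_
    rw [abs_mul, abs_of_nonneg hs]
    have := Real.abs_cos_le_one T
    have := Real.abs_sin_le_one T
    nlinarith
  rw [abs_mul, abs_mul, Real.abs_exp, abs_of_pos (by positivity : 0 < (1+s^2)⁻¹), mul_assoc, mul_comm 2]
  gcongr
  rw [← div_eq_mul_inv, div_le_iff₀ (by positivity)]
  nlinarith [sq_nonneg (s-1)]

lemma si_close {T : ℝ} (hT : 0 < T) :
    |(∫ x in (0:ℝ)..T, Real.sinc x) - Real.pi / 2| ≤ 2 * T⁻¹ := by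
  have e1 : ∫ x in (0:ℝ)..T, Real.sinc x
      = ∫ x in Set.Ioc 0 T, ∫ s in Set.Ioi (0:ℝ), Real.exp (-s * x) * Real.sin x := by
    rw [intervalIntegral.integral_of_le hT.le]
    refine setIntegral_congr_fun measurableSet_Ioc fun x hx => ?_
    rw [integral_mul_const, aux_exp hx.1, Real.sinc_of_ne_zero hx.1.ne']
    field_simp
  rw [e1, integral_integral_swap (aux_fub T)]
  simp_rw [← intervalIntegral.integral_of_le hT.le, aux_inner]
  have hI : IntegrableOn (fun s => Real.exp (-s*T) * (Real.cos T + s * Real.sin T) * (1+s^2)⁻¹)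
      (Set.Ioi (0:ℝ)) := by
    refine Integrable.mono' ((aux_exp_int hT).const_mul 2) ?_ ?_
    · apply Measurable.aestronglyMeasurable; fun_prop
    · filter_upwards [ae_restrict_mem measurableSet_Ioi] with s hs
      exact aux_err_le T s (le_of_lt hs)
  rw [integral_sub integrable_inv_one_add_sq.integrableOn hI, integral_Ioi_inv_one_add_sq]
  simp only [Real.arctan_zero, sub_zero, sub_sub_cancel_left, abs_neg]
  rw [← aux_exp hT, ← integral_const_mul]
  refine norm_integral_le_of_norm_le (f := fun s => Real.exp (-s*T) * (Real.cos T + s * Real.sin T) * (1+s^2)⁻¹) ((aux_exp_int hT).const_mul 2) ?_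
  filter_upwards [ae_restrict_mem measurableSet_Ioi] with s hs
  exact aux_err_le T s (le_of_lt hs)

noncomputable def Si (T : ℝ) : ℝ := ∫ x in (0:ℝ)..T, Real.sinc x

lemma Si_neg (T : ℝ) : Si (-T) = - Si T := by
  have := intervalIntegral.integral_comp_neg (a := 0) (b := T) Real.sinc
  simp only [Real.sinc_neg, neg_zero] at this
  rw [Si, Si, this, intervalIntegral.integral_symm]

lemma Si_atTop : Tendsto Si atTop (nhds (Real.pi / 2)) := by
  rw [tendsto_iff_norm_sub_tendsto_zero]
  have : Tendsto (fun T : ℝ => 2 * T⁻¹) atTop (nhds 0) := by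
    simpa using tendsto_inv_atTop_zero.const_mul (2:ℝ)
  refine squeeze_zero' (.of_forall fun _ => norm_nonneg _) ?_ this
  filter_upwards [eventually_gt_atTop 0] with T hT
  exact si_close hT

lemma Si_atBot : Tendsto Si atBot (nhds (-(Real.pi / 2))) := by
  have := (Si_atTop.comp tendsto_neg_atBot_atTop).neg
  refine this.congr fun x => ?_
  simp [Si_neg]

lemma Si_bdd_pos {T : ℝ} (hT : 0 ≤ T) : |Si T| ≤ 4 := by
  by_cases h : T ≤ 1
  · have := intervalIntegral.norm_integral_le_of_norm_le_const (a := 0) (b := T) (C := 1)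
      (f := Real.sinc) (fun x _ => Real.abs_sinc_le_one x)
    rw [Real.norm_eq_abs] at this
    rw [Si]
    simp [abs_of_nonneg hT] at this
    linarith
  · have h1 := si_close (T := T) (by linarith)
    have h2 : T⁻¹ ≤ 1 := inv_le_one_of_one_le₀ (by linarith)
    have := Real.pi_le_four
    have := Real.pi_pos
    rw [Si]
    rw [abs_le] at *
    constructor <;> linarith

lemma Si_bdd (T : ℝ) : |Si T| ≤ 4 := by
  rcases le_total 0 T with h | h
  · exact Si_bdd_pos h
  · have := Si_bdd_pos (T := -T) (by linarith)
    rwa [Si_neg, abs_neg] at this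

lemma kernel_eq (a b x : ℝ) (R : ℝ) :
    ∫ z in (-R)..R, Complex.exp (Complex.I * z * x) *
      ∫ y in a..b, Complex.exp (-(Complex.I * (z : ℂ) * (y : ℂ)))
    = ((2 * (Si (R * x - R * a) - Si (R * x - R * b)) : ℝ) : ℂ) := by
  simp_rw [← intervalIntegral.integral_const_mul]
  rw [intervalIntegral_intervalIntegral_swap]
  swap
  · simp only [Function.uncurry_def]
    refine (ContinuousOn.integrableOn_compact (K := Set.uIcc (-R) R ×ˢ Set.uIcc a b)
      (isCompact_uIcc.prod isCompact_uIcc) ?_).mono_set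
      (Set.prod_mono Set.uIoc_subset_uIcc Set.uIoc_subset_uIcc)
    apply Continuous.continuousOn
    fun_prop
  have h1 : ∀ y : ℝ, ∫ z in (-R)..R, Complex.exp (Complex.I * z * x) *
      Complex.exp (-(Complex.I * (z : ℂ) * (y : ℂ))) = ((2 * (R * Real.sinc (R * x - R * y)) : ℝ) : ℂ) := by
    intro y
    simp_rw [← Complex.exp_add]
    by_cases hxy : x = y
    · subst hxy; simp; ring
    have hxy' : x - y ≠ 0 := sub_ne_zero.2 hxy
    have h2 := intervalIntegral.integral_comp_mul_right (a := -R) (b := R) (c := x - y)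
      (fun t : ℝ => Complex.exp (t * Complex.I)) hxy'
    rw [neg_mul, integral_exp_mul_I_eq_sinc] at h2
    rw [← mul_sub]
    convert h2 using 1
    · congr 1; ext z; congr 1; push_cast; ring
    · have : (x:ℂ) - y ≠ 0 := by exact_mod_cast hxy'
      rw [Complex.real_smul]; push_cast; field_simp
  simp_rw [h1]
  rw [intervalIntegral.integral_ofReal]
  congr 1
  rw [intervalIntegral.integral_const_mul, intervalIntegral.integral_const_mul,
   intervalIntegral.mul_integral_comp_sub_mul]
  congr 1
  rw [Si, Si, intervalIntegral.integral_interval_sub_left] <;>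
  exact Real.continuous_sinc.intervalIntegrable _ _


lemma kernel_norm_le (a b x R : ℝ) :
    ‖((2 * (Si (R * x - R * a) - Si (R * x - R * b)) : ℝ) : ℂ)‖ ≤ 16 := by
  rw [Complex.norm_real, Real.norm_eq_abs]
  have h1 := abs_le.1 (Si_bdd (R * x - R * a))
  have h2 := abs_le.1 (Si_bdd (R * x - R * b))
  rw [abs_le]; constructor <;> linarith

lemma Si_lim_pos {c : ℝ} (hc : 0 < c) :
    Tendsto (fun R : ℝ => Si (R * c)) atTop (nhds (Real.pi / 2)) :=
  Si_atTop.comp (tendsto_id.atTop_mul_const hc)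

lemma Si_lim_neg {c : ℝ} (hc : c < 0) :
    Tendsto (fun R : ℝ => Si (R * c)) atTop (nhds (-(Real.pi / 2))) :=
  Si_atBot.comp (tendsto_id.atTop_mul_const_of_neg hc)

lemma kernel_lim (a b x : ℝ) (hab : a < b) (hxa : x ≠ a) (hxb : x ≠ b) :
    Tendsto (fun R : ℝ => ((2 * (Si (R * x - R * a) - Si (R * x - R * b)) : ℝ) : ℂ)) atTop
      (nhds ((Set.indicator (Set.Icc a b) (fun _ => 2 * Real.pi) x : ℝ) : ℂ)) := by
  refine (Complex.continuous_ofReal.tendsto _).comp ?_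
  simp_rw [← mul_sub]
  rcases lt_or_gt_of_ne hxa with h1 | h1
  · have := ((Si_lim_neg (sub_neg.2 h1)).sub (Si_lim_neg (sub_neg.2 (h1.trans hab)))).const_mul 2
    rw [Set.indicator_of_notMem (by simp; intro h; linarith)]
    simpa using this
  · rcases lt_or_gt_of_ne hxb with h2 | h2
    · have := ((Si_lim_pos (sub_pos.2 h1)).sub (Si_lim_neg (sub_neg.2 h2))).const_mul 2
      rw [Set.indicator_of_mem (Set.mem_Icc.2 ⟨h1.le, h2.le⟩)]
      convert this using 2
      ring
    · have := ((Si_lim_pos (sub_pos.2 h1)).sub (Si_lim_pos (sub_pos.2 h2))).const_mul 2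
      rw [Set.indicator_of_notMem (by simp; intro h; linarith)]
      simpa using this

/-- Inversion for an integrable density against an s-finite measure. -/
lemma inversion (U : Measure ℝ) [SFinite U] (g : ℝ → ℝ) (hg : Integrable g U)
    (a b : ℝ) (hab : a < b) (ha : U {a} = 0) (hb : U {b} = 0) :
    Tendsto (fun R : ℝ => ∫ z in (-R)..R, (∫ x, Complex.exp (Complex.I * z * x) * (g x : ℂ) ∂U) *
        ∫ y in a..b, Complex.exp (-(Complex.I * (z : ℂ) * (y : ℂ)))) atTop
      (nhds ((2 * Real.pi * ∫ x in Set.Icc a b, g x ∂U : ℝ) : ℂ)) := by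
  have e : ∀ R : ℝ, (∫ z in (-R)..R, (∫ x, Complex.exp (Complex.I * z * x) * (g x : ℂ) ∂U) *
        ∫ y in a..b, Complex.exp (-(Complex.I * (z : ℂ) * (y : ℂ))))
      = ∫ x, ((2 * (Si (R * x - R * a) - Si (R * x - R * b)) : ℝ) : ℂ) * (g x : ℂ) ∂U := by
    intro R
    simp_rw [← integral_mul_const]
    rw [intervalIntegral_integral_swap]
    · congr 1; ext x
      rw [← kernel_eq a b x R, ← intervalIntegral.integral_mul_const]
      congr 1; ext z; ring
    · have hK : Continuous fun z : ℝ => ∫ y in a..b, Complex.exp (-(Complex.I * (z : ℂ) * (y : ℂ))) := by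
        apply intervalIntegral.continuous_parametric_intervalIntegral_of_continuous'
        fun_prop
      have hKi : Integrable (fun z : ℝ => ∫ y in a..b, Complex.exp (-(Complex.I * (z : ℂ) * (y : ℂ))))
          (volume.restrict (Set.uIoc (-R) R)) :=
        (hK.continuousOn.integrableOn_compact isCompact_uIcc).mono_set Set.uIoc_subset_uIcc
      have hp := hKi.mul_prod (hg.ofReal (𝕜 := ℂ))
      have := hp.bdd_mul (c := 1) (f := fun p : ℝ × ℝ => Complex.exp (Complex.I * p.1 * p.2))
        (by apply Continuous.aestronglyMeasurable; fun_prop)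
        (.of_forall fun p => by
          rw [show Complex.I * p.1 * p.2 = ((p.1 * p.2 : ℝ) : ℂ) * Complex.I by push_cast; ring,
            Complex.norm_exp_ofReal_mul_I])
      refine this.congr (.of_forall fun p => ?_)
      simp only [Function.uncurry_def]
      simp; ring
  simp_rw [e]
  have hlim : ((2 * Real.pi * ∫ x in Set.Icc a b, g x ∂U : ℝ) : ℂ)
      = ∫ x, ((Set.indicator (Set.Icc a b) (fun _ => 2 * Real.pi) x : ℝ) : ℂ) * (g x : ℂ) ∂U := by
    rw [← integral_const_mul, ← integral_indicator measurableSet_Icc, ← integral_complex_ofReal]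
    congr 1; ext x
    by_cases hx : x ∈ Set.Icc a b <;> simp [hx]
  rw [hlim]
  have hSi : Continuous Si := intervalIntegral.continuous_primitive
    (fun _ _ => Real.continuous_sinc.intervalIntegrable _ _) 0
  refine tendsto_integral_filter_of_dominated_convergence (fun x => 16 * ‖(g x : ℂ)‖) ?_ ?_ ?_ ?_
  · refine .of_forall fun R => ?_
    refine AEStronglyMeasurable.mul ?_ (hg.ofReal (𝕜 := ℂ)).1
    apply Continuous.aestronglyMeasurable; fun_prop
  · refine .of_forall fun R => .of_forall fun x => ?_
    rw [norm_mul]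
    gcongr
    exact kernel_norm_le a b x R
  · exact (hg.ofReal (𝕜 := ℂ)).norm.const_mul 16
  · have hxa : ∀ᵐ x ∂U, x ≠ a := by simpa [ae_iff] using ha
    have hxb : ∀ᵐ x ∂U, x ≠ b := by simpa [ae_iff] using hb
    filter_upwards [hxa, hxb] with x h1 h2
    exact (kernel_lim a b x hab h1 h2).mul_const _

lemma levy_sFinite (U : Measure ℝ) (hU0 : U {0} = 0)
    (hUfin : ∫⁻ x, ENNReal.ofReal (min 1 (x ^ 2)) ∂U < ⊤) : SFinite U := by
  have hx0 : ∀ᵐ x ∂U, x ≠ 0 := by simpa [ae_iff] using hU0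
  have h := withDensity_inv_same (μ := U) (f := fun x => ENNReal.ofReal (min 1 (x ^ 2)))
    (by fun_prop) (by
      filter_upwards [hx0] with x hx
      simpa using hx) (.of_forall fun x => ENNReal.ofReal_ne_top)
  have := isFiniteMeasure_withDensity hUfin.ne
  rw [← h]
  infer_instance

lemma levy_int (U : Measure ℝ)
    (hUfin : ∫⁻ x, ENNReal.ofReal (min 1 (x ^ 2)) ∂U < ⊤) :
    Integrable (fun x : ℝ => min 1 (x^2)) U := by
  refine ⟨by apply Continuous.aestronglyMeasurable; fun_prop, ?_⟩
  rw [hasFiniteIntegral_iff_ofReal (.of_forall fun x => by positivity)]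
  exact hUfin

lemma exp_taylor (u : ℝ) : ‖Complex.exp (Complex.I * u) - 1 - Complex.I * u‖ ≤ 2 * u^2 := by
  by_cases hu : |u| ≤ 1
  · have := Complex.norm_exp_sub_one_sub_id_le (x := Complex.I * u) (by simpa using hu)
    simp at this
    nlinarith [sq_nonneg u]
  · have h1 : ‖Complex.exp (Complex.I * u) - 1‖ ≤ |u| := Real.norm_exp_I_mul_ofReal_sub_one_le
    have h2 : ‖Complex.I * u‖ = |u| := by simp
    have := norm_sub_le (Complex.exp (Complex.I * u) - 1) (Complex.I * u)
    rw [← sq_abs u]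
    push Not at hu
    nlinarith

lemma q_bound (h : ℝ → ℝ)
    (hsmall : (fun x => h x - 1) =o[nhds (0 : ℝ)] fun x => x)
    (hxh : ∃ C, ∀ x, |x * h x| ≤ C) :
    ∃ D : ℝ, 0 ≤ D ∧ ∀ z x : ℝ, ‖Complex.exp (Complex.I * (z : ℂ) * (x : ℂ)) - 1
        - Complex.I * (z : ℂ) * (x : ℂ) * (h x : ℂ)‖ ≤ D * (1 + |z|) ^ 2 * min 1 (x^2) := by
  obtain ⟨C, hC⟩ := hxh
  have hC0 : 0 ≤ C := (abs_nonneg _).trans (hC 0)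
  have hs := hsmall.def (c := 1) one_pos
  obtain ⟨δ, hδ, hs⟩ := Metric.eventually_nhds_iff.1 hs
  set d := min δ 1 with hd
  have hd0 : 0 < d := lt_min hδ one_pos
  have hd1 : d ≤ 1 := min_le_right _ _
  refine ⟨2 + (2 + C) / d^2, by positivity, fun z x => ?_⟩
  have hz := abs_nonneg z
  have hCd : 0 ≤ (2 + C) / d^2 := by positivity
  by_cases hx : |x| < d
  · have hx1 : x^2 ≤ 1 := by rw [← sq_abs]; nlinarith [abs_nonneg x]
    rw [min_eq_right hx1]
    have h1 : |h x - 1| ≤ |x| := by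
      have := hs (y := x) (by rw [Real.dist_eq, sub_zero]; exact hx.trans_le (min_le_left _ _))
      simpa using this
    have h2 := exp_taylor (z * x)
    have e : Complex.exp (Complex.I * (z : ℂ) * (x : ℂ)) - 1
        - Complex.I * (z : ℂ) * (x : ℂ) * (h x : ℂ) =
        (Complex.exp (Complex.I * (z * x : ℝ)) - 1 - Complex.I * (z * x : ℝ))
        - Complex.I * ((z * x * (h x - 1) : ℝ) : ℂ) := by
      push_cast; ring_nf
    have h3 : ‖Complex.I * ((z * x * (h x - 1) : ℝ) : ℂ)‖ ≤ |z| * x^2 := by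
      rw [norm_mul, Complex.norm_I, one_mul, Complex.norm_real, Real.norm_eq_abs, abs_mul, abs_mul,
        ← sq_abs x, mul_assoc, pow_two]
      gcongr
    rw [e]
    refine (norm_sub_le _ _).trans ((add_le_add h2 h3).trans ?_)
    rw [mul_pow, ← sq_abs z]
    have : 2 * (|z|^2 * x^2) + |z| * x^2 = (2 * |z|^2 + |z|) * x^2 := by ring
    rw [this]
    gcongr
    nlinarith [mul_nonneg hCd (sq_nonneg (1 + |z|))]
  · push Not at hx
    have hm : d^2 ≤ min 1 (x^2) := by
      rw [← sq_abs x]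
      refine le_min ?_ ?_
      · nlinarith
      · gcongr
    have h1 : ‖Complex.exp (Complex.I * (z : ℂ) * (x : ℂ)) - 1
        - Complex.I * (z : ℂ) * (x : ℂ) * (h x : ℂ)‖ ≤ 2 + |z| * C := by
      have h2 : ‖Complex.exp (Complex.I * (z : ℂ) * (x : ℂ))‖ = 1 := by
        rw [show Complex.I * z * x = ((z * x : ℝ) : ℂ) * Complex.I by push_cast; ring,
            Complex.norm_exp_ofReal_mul_I]
      have h3 : ‖Complex.I * (z : ℂ) * (x : ℂ) * (h x : ℂ)‖ ≤ |z| * C := by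
        have := hC x
        rw [show Complex.I * (z : ℂ) * (x : ℂ) * (h x : ℂ) = Complex.I * (z * (x * h x : ℝ)) by
          push_cast; ring]
        simp only [norm_mul, Complex.norm_I, one_mul, Complex.norm_real, Real.norm_eq_abs]
        rw [← abs_mul x]
        gcongr
      have h4 := norm_sub_le (Complex.exp (Complex.I * (z : ℂ) * (x : ℂ)) - 1)
        (Complex.I * (z : ℂ) * (x : ℂ) * (h x : ℂ))
      have h5 := norm_sub_le (Complex.exp (Complex.I * (z : ℂ) * (x : ℂ))) 1
      rw [norm_one] at h5
      linarith
    refine h1.trans ?_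
    calc 2 + |z| * C ≤ (2 + C) * (1 + |z|)^2 := by nlinarith [mul_nonneg hC0 hz, mul_nonneg hC0 (sq_nonneg |z|)]
      _ = (2 + C) / d^2 * (1 + |z|)^2 * d^2 := by field_simp
      _ ≤ (2 + (2 + C) / d^2) * (1 + |z|)^2 * min 1 (x^2) := by
        gcongr
        linarith

lemma int_exp_itx (x : ℝ) : ∫ t in (-1:ℝ)..1, Complex.exp (Complex.I * t * x) = 2 * (Real.sinc x : ℂ) := by
  by_cases hx : x = 0
  · subst hx; simp; norm_num
  have h2 := intervalIntegral.integral_comp_mul_right (a := -1) (b := 1) (c := x)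
      (fun t : ℝ => Complex.exp (t * Complex.I)) hx
  rw [neg_mul, one_mul, integral_exp_mul_I_eq_sinc] at h2
  convert h2 using 1
  · congr 1; ext z; congr 1; push_cast; ring
  · have : (x:ℂ) ≠ 0 := by exact_mod_cast hx
    rw [Complex.real_smul]; push_cast; field_simp

lemma inner_t (z x H : ℝ) :
    ∫ t in (-1:ℝ)..1, ((Complex.exp (Complex.I * (z : ℂ) * (x : ℂ)) - 1
        - Complex.I * (z : ℂ) * (x : ℂ) * (H : ℂ)) -
        (Complex.exp (Complex.I * ((z + t : ℝ) : ℂ) * (x : ℂ)) - 1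
        - Complex.I * ((z + t : ℝ) : ℂ) * (x : ℂ) * (H : ℂ)))
     = 2 * (Complex.exp (Complex.I * z * x) * ((1 - Real.sinc x : ℝ) : ℂ)) := by
  have e : ∀ t : ℝ, ((Complex.exp (Complex.I * (z : ℂ) * (x : ℂ)) - 1
        - Complex.I * (z : ℂ) * (x : ℂ) * (H : ℂ)) -
        (Complex.exp (Complex.I * ((z + t : ℝ) : ℂ) * (x : ℂ)) - 1
        - Complex.I * ((z + t : ℝ) : ℂ) * (x : ℂ) * (H : ℂ)))
      = (Complex.exp (Complex.I * (z : ℂ) * (x : ℂ)) - Complex.exp (Complex.I * (z : ℂ) * (x : ℂ)) *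
         Complex.exp (Complex.I * t * x)) + (t : ℂ) * (Complex.I * x * H) := by
    intro t
    rw [← Complex.exp_add]
    push_cast; ring_nf
  simp_rw [e]
  rw [intervalIntegral.integral_add, intervalIntegral.integral_sub,
    intervalIntegral.integral_const_mul, int_exp_itx, intervalIntegral.integral_mul_const,
    intervalIntegral.integral_ofReal]
  · simp
    norm_num
    ring
  all_goals apply Continuous.intervalIntegrable; fun_prop

set_option maxHeartbeats 1000000 in
/-- **inversion formula (1).** For a Lévy measure `U`, cumulant `ψ` and
`ρ̂(z) = ∫_{−1}^{1} (ψ(z) − ψ(z+λ)) dλ − σ²/3`, and `a < b` with `U({a}) = U({b}) = 0`,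
`∫_{[a,b]} ((x − sin x)/x) U(dx) = (1/(4π)) · v.p. ∫_ℝ ρ̂(z) (∫_a^b e^{−izx} dx) dz`,
the principal value being the limit of integrals over `[−R, R]` as `R → ∞`. -/
theorem statement1
    (U : Measure ℝ) (hU0 : U {0} = 0)
    (hUfin : ∫⁻ x, ENNReal.ofReal (min 1 (x ^ 2)) ∂U < ⊤)
    (h : ℝ → ℝ) (hmeas : Measurable h)
    (hbdd : ∃ C, ∀ x, |h x| ≤ C)
    (hsmall : (fun x => h x - 1) =o[nhds (0 : ℝ)] fun x => x)
    (hlarge : h =O[Filter.cocompact ℝ] fun x => x⁻¹)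
    (hxh : ∃ C, ∀ x, |x * h x| ≤ C)
    (γ σ : ℝ) (hσ : 0 ≤ σ)
    (ψ : ℝ → ℂ)
    (hψ : ∀ z : ℝ, ψ z = Complex.I * (γ : ℂ) * (z : ℂ) - (σ : ℂ) ^ 2 * (z : ℂ) ^ 2 / 2 +
      ∫ x, (Complex.exp (Complex.I * (z : ℂ) * (x : ℂ)) - 1
        - Complex.I * (z : ℂ) * (x : ℂ) * (h x : ℂ)) ∂U)
    (ρhat : ℝ → ℂ)
    (hρ : ∀ z : ℝ, ρhat z = (∫ t in (-1 : ℝ)..1, (ψ z - ψ (z + t))) - (σ : ℂ) ^ 2 / 3)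
    (a b : ℝ) (hab : a < b) (ha : U {a} = 0) (hb : U {b} = 0) :
    ∃ L : ℂ,
      Filter.Tendsto
        (fun R : ℝ => ∫ z in (-R)..R,
          ρhat z * ∫ x in a..b, Complex.exp (-(Complex.I * (z : ℂ) * (x : ℂ))))
        Filter.atTop (nhds L) ∧
      ((∫ x in Set.Icc a b, (if x = 0 then 0 else (x - Real.sin x) / x) ∂U : ℝ) : ℂ)
        = 1 / (4 * (Real.pi : ℂ)) * L := by
  have := levy_sFinite U hU0 hUfin
  have hmin := levy_int U hUfin
  obtain ⟨D, hD0, hD⟩ := q_bound h hsmall hxh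
  set q : ℝ → ℝ → ℂ := fun z x => Complex.exp (Complex.I * (z : ℂ) * (x : ℂ)) - 1
        - Complex.I * (z : ℂ) * (x : ℂ) * (h x : ℂ) with hq
  have hqm : Measurable (Function.uncurry q) := by
    simp only [hq, Function.uncurry_def]
    fun_prop
  have hqi : ∀ z, Integrable (q z) U := fun z => by
    refine Integrable.mono' (hmin.const_mul (D * (1 + |z|)^2)) ?_ (.of_forall fun x => hD z x)
    exact (hqm.comp (measurable_const.prodMk measurable_id)).aestronglyMeasurable
  have hG : ∀ z, Integrable (Function.uncurry fun t x : ℝ => q z x - q (z + t) x)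
      ((volume.restrict (Set.uIoc (-1:ℝ) 1)).prod U) := fun z => by
    have hc : Integrable (fun _ : ℝ => 2 * (D * (2 + |z|)^2)) (volume.restrict (Set.uIoc (-1:ℝ) 1)) := by
      rw [Set.uIoc_of_le (by norm_num)]
      exact integrable_const _
    refine Integrable.mono' (hc.mul_prod hmin) ?_ ?_
    · apply Measurable.aestronglyMeasurable
      simp only [hq, Function.uncurry_def]
      fun_prop
    · have : ∀ᵐ p ∂((volume.restrict (Set.uIoc (-1:ℝ) 1)).prod U), p.1 ∈ Set.uIoc (-1:ℝ) 1 :=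
        Measure.quasiMeasurePreserving_fst.ae (ae_restrict_mem measurableSet_uIoc)
      filter_upwards [this] with p hp
      rw [Set.uIoc_of_le (by norm_num)] at hp
      have ht : |p.1| ≤ 1 := abs_le.2 ⟨hp.1.le, hp.2⟩
      have hm0 : 0 ≤ min 1 (p.2^2) := by positivity
      have hz := abs_nonneg z
      have h1 : ‖q z p.2‖ ≤ D * (2 + |z|)^2 * min 1 (p.2^2) := by
        refine (hD z p.2).trans ?_
        gcongr
        norm_num
      have h2 : ‖q (z + p.1) p.2‖ ≤ D * (2 + |z|)^2 * min 1 (p.2^2) := by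
        refine (hD (z + p.1) p.2).trans ?_
        gcongr ?_ * ?_ ^ 2 * ?_
        have := abs_add_le z p.1
        linarith
      refine (norm_sub_le _ _).trans ?_
      linarith
  have hswap : ∀ z, ∫ t in (-1:ℝ)..1, ∫ x, (q z x - q (z + t) x) ∂U
      = 2 * ∫ x, Complex.exp (Complex.I * z * x) * ((1 - Real.sinc x : ℝ) : ℂ) ∂U := fun z => by
    rw [intervalIntegral_integral_swap (hG z), ← integral_const_mul]
    congr 1; ext x
    exact inner_t z x (h x)
  have hρ' : ∀ z, ρhat z = 2 * ∫ x, Complex.exp (Complex.I * z * x) * ((1 - Real.sinc x : ℝ) : ℂ) ∂U := by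
    intro z
    have e : ∀ t : ℝ, ψ z - ψ (z + t) = ((t : ℂ) * (-Complex.I * γ + (σ:ℂ)^2 * z) + ((t^2 : ℝ) : ℂ) * ((σ:ℂ)^2 / 2))
        + ∫ x, (q z x - q (z + t) x) ∂U := by
      intro t
      rw [integral_sub (hqi z) (hqi _), hψ, hψ]
      simp only [hq]
      push_cast
      ring
    rw [hρ]
    simp_rw [e]
    rw [intervalIntegral.integral_add, hswap, intervalIntegral.integral_add,
      intervalIntegral.integral_mul_const, intervalIntegral.integral_mul_const,
      intervalIntegral.integral_ofReal, intervalIntegral.integral_ofReal]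
    · simp
      norm_num
    · apply Continuous.intervalIntegrable; fun_prop
    · apply Continuous.intervalIntegrable; fun_prop
    · apply Continuous.intervalIntegrable; fun_prop
    · rw [intervalIntegrable_iff]
      exact (hG z).integral_prod_left
  have hg : Integrable (fun x => 1 - Real.sinc x) U := by
    have h1 := (hG 0).integral_prod_right
    have h2 : ∀ x : ℝ, ∫ t in Set.uIoc (-1:ℝ) 1, (Function.uncurry fun t x : ℝ => q 0 x - q (0 + t) x) (t, x)
        = ((2 * (1 - Real.sinc x) : ℝ) : ℂ) := by
      intro x
      have h3 := inner_t 0 x (h x)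
      rw [intervalIntegral.integral_of_le (by norm_num)] at h3
      rw [Set.uIoc_of_le (by norm_num)]
      refine h3.trans ?_
      push_cast
      simp
    simp_rw [h2] at h1
    have h4 := h1.re.const_mul (1/2)
    refine h4.congr (.of_forall fun x => ?_)
    simp
  have hinv := (inversion U _ hg a b hab ha hb).const_mul 2
  refine ⟨_, hinv.congr fun R => ?_, ?_⟩
  · rw [← intervalIntegral.integral_const_mul]
    congr 1; ext z
    rw [hρ', mul_assoc]
  · have : (fun x : ℝ => if x = 0 then 0 else (x - Real.sin x) / x) = fun x => 1 - Real.sinc x := by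
      ext x
      by_cases hx : x = 0
      · simp [hx]
      · rw [if_neg hx, Real.sinc_of_ne_zero hx]; field_simp
    rw [this]
    have hpi : (Real.pi : ℂ) ≠ 0 := by exact_mod_cast Real.pi_ne_zero
    push_cast
    field_simp
    ring
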